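/- Let n ≥ 1 and let H : ℝ → ℂ^{2n×2n} be continuous with H(t)ᵀ = H(t). Let S : ℝ → ℂ^{2n×2n} be differentiable with S'(t) = Ω·H(t)·S(t) and S(0) = I_{2n}, and let J : ℝ → ℝ^{2n×2n} be differentiable and satisfy J'(t) = Ω·Re H(t)·J(t) − J(t)·Ω·Re H(t) + Ω·Im H(t) + J(t)·Ω·Im H(t)·J(t). Then for every z₀ ∈ ℝ^{2n}, the curve z(t) := Re(S(t)z₀) + J(t)·Im(S(t)z₀) ∈ ℝ^{2n} is differentiable and satisfies z'(t) = Ω·Re H(t)·z(t) + J(t)·Ω·Im H(t)·z(t). (If J(t) = −Ω G(t) with G(t) symplectic, then J(t)Ω = G(t)⁻¹, so this is z' = Ω Re H z + G⁻¹ Im H z.) -/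

import Mathlib

open Matrix

noncomputable section

/-- The standard symplectic matrix `Ω = [[0, -Iₙ], [Iₙ, 0]]` over `ℝ`. -/
def Omr (n : ℕ) : Matrix (Fin n ⊕ Fin n) (Fin n ⊕ Fin n) ℝ :=
  Matrix.fromBlocks 0 (-1) 1 0

/-- The standard symplectic matrix `Ω = [[0, -Iₙ], [Iₙ, 0]]` over `ℂ`. -/
def Omc (n : ℕ) : Matrix (Fin n ⊕ Fin n) (Fin n ⊕ Fin n) ℂ :=
  Matrix.fromBlocks 0 (-1) 1 0

/-- Entrywise real part of a complex matrix. -/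
def reMat {m k : Type*} (M : Matrix m k ℂ) : Matrix m k ℝ :=
  Matrix.of fun i j => (M i j).re

/-- Entrywise imaginary part of a complex matrix. -/
def imMat {m k : Type*} (M : Matrix m k ℂ) : Matrix m k ℝ :=
  Matrix.of fun i j => (M i j).im

/-!
Split `ψ' = A ψ` with `A = P + iQ` into `(Re ψ)' = P Re ψ - Q Im ψ` and
`(Im ψ)' = Q Re ψ + P Im ψ`. In the derivative of `Re ψ + J Im ψ` the Riccati equation
`J' = P J - J P + Q + J Q J` is exactly what cancels the terms `Q Im ψ` and `J P Im ψ`; what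
remains is `(P + J Q) (Re ψ + J Im ψ)`. The theorem is the case `A = Ω H`, `ψ = S z₀`, where
`P = Ω Re H` and `Q = Ω Im H` because `Ω` is real.
-/

section RealAndImaginaryParts

variable {k l m : Type*} [Fintype m]

theorem re_mulVec (A : Matrix k m ℂ) (v : m → ℂ) :
    (fun i => ((A *ᵥ v) i).re) =
      reMat A *ᵥ (fun j => (v j).re) - imMat A *ᵥ (fun j => (v j).im) := by
  ext i
  simp [mulVec, dotProduct, reMat, imMat, Finset.sum_sub_distrib]

theorem im_mulVec (A : Matrix k m ℂ) (v : m → ℂ) :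
    (fun i => ((A *ᵥ v) i).im) =
      imMat A *ᵥ (fun j => (v j).re) + reMat A *ᵥ (fun j => (v j).im) := by
  ext i
  simp [mulVec, dotProduct, reMat, imMat, Finset.sum_add_distrib, add_comm]

theorem reMat_map_ofReal_mul (R : Matrix k m ℝ) (M : Matrix m l ℂ) :
    reMat (R.map Complex.ofReal * M) = R * reMat M := by
  ext i j
  simp [mul_apply, reMat]

theorem imMat_map_ofReal_mul (R : Matrix k m ℝ) (M : Matrix m l ℂ) :
    imMat (R.map Complex.ofReal * M) = R * imMat M := by
  ext i j
  simp [mul_apply, imMat]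

theorem Omc_eq_map_Omr (n : ℕ) : Omc n = (Omr n).map Complex.ofReal := by
  simp [Omc, Omr, fromBlocks_map, Matrix.map_neg]

end RealAndImaginaryParts

section EntrywiseParts

variable {m : Type*} [Finite m] {ψ : ℝ → m → ℂ} {ψ' : m → ℂ} {t : ℝ}

theorem hasDerivAt_re (hψ : HasDerivAt ψ ψ' t) :
    HasDerivAt (fun s i => (ψ s i).re) (fun i => (ψ' i).re) t := by
  have := Fintype.ofFinite m
  exact hasDerivAt_pi.2 fun i =>
    Complex.reCLM.hasFDerivAt.comp_hasDerivAt t (hasDerivAt_pi.1 hψ i)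

theorem hasDerivAt_im (hψ : HasDerivAt ψ ψ' t) :
    HasDerivAt (fun s i => (ψ s i).im) (fun i => (ψ' i).im) t := by
  have := Fintype.ofFinite m
  exact hasDerivAt_pi.2 fun i =>
    Complex.imCLM.hasFDerivAt.comp_hasDerivAt t (hasDerivAt_pi.1 hψ i)

end EntrywiseParts

section MatrixValued

variable {𝕜 : Type*} [NontriviallyNormedField 𝕜] {k m : Type*} {t : 𝕜}

theorem hasDerivAt_matrix_iff {E : Type*} [NormedAddCommGroup E] [NormedSpace 𝕜 E]
    [Finite k] [Finite m] {M : 𝕜 → Matrix k m E} {M' : Matrix k m E} :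
    HasDerivAt M M' t ↔ ∀ i j, HasDerivAt (fun s => M s i j) (M' i j) t := by
  have := Fintype.ofFinite k
  have := Fintype.ofFinite m
  exact hasDerivAt_pi.trans (forall_congr' fun _ => hasDerivAt_pi)

variable {R : Type*} [NormedRing R] [NormedAlgebra 𝕜 R] [Fintype m]

theorem hasDerivAt_mulVec [Finite k] {M : 𝕜 → Matrix k m R} {M' : Matrix k m R}
    {v : 𝕜 → m → R} {v' : m → R} (hM : HasDerivAt M M' t) (hv : HasDerivAt v v' t) :
    HasDerivAt (fun s => M s *ᵥ v s) (M' *ᵥ v t + M t *ᵥ v') t := by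
  have := Fintype.ofFinite k
  refine hasDerivAt_pi.2 fun i => ?_
  have hsum := HasDerivAt.fun_sum (u := Finset.univ) fun j _ =>
    (hasDerivAt_matrix_iff.1 hM i j).fun_mul (hasDerivAt_pi.1 hv j)
  rwa [Finset.sum_add_distrib] at hsum

theorem hasDerivAt_add_mulVec_of_riccati {P Q : Matrix m m R} {J : 𝕜 → Matrix m m R}
    {x y : 𝕜 → m → R}
    (hx : HasDerivAt x (P *ᵥ x t - Q *ᵥ y t) t)
    (hy : HasDerivAt y (Q *ᵥ x t + P *ᵥ y t) t)
    (hJ : HasDerivAt J (P * J t - J t * P + Q + J t * Q * J t) t) :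
    HasDerivAt (fun s => x s + J s *ᵥ y s)
      (P *ᵥ (x t + J t *ᵥ y t) + (J t * Q) *ᵥ (x t + J t *ᵥ y t)) t := by
  refine (hx.fun_add (hasDerivAt_mulVec hJ hy)).congr_deriv ?_
  simp only [mulVec_add, add_mulVec, sub_mulVec, mulVec_mulVec]
  abel

end MatrixValued

theorem hasDerivAt_re_add_mulVec_im_of_riccati {m : Type*} [Fintype m] {A : Matrix m m ℂ}
    {ψ : ℝ → m → ℂ} {J : ℝ → Matrix m m ℝ} {t : ℝ} (hψ : HasDerivAt ψ (A *ᵥ ψ t) t)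
    (hJ : HasDerivAt J
      (reMat A * J t - J t * reMat A + imMat A + J t * imMat A * J t) t) :
    let z : ℝ → m → ℝ := fun s => (fun i => (ψ s i).re) + J s *ᵥ (fun i => (ψ s i).im)
    HasDerivAt z (reMat A *ᵥ z t + (J t * imMat A) *ᵥ z t) t := by
  have hre := hasDerivAt_re hψ
  have him := hasDerivAt_im hψ
  rw [re_mulVec] at hre
  rw [im_mulVec] at him
  exact hasDerivAt_add_mulVec_of_riccati hre him hJ

theorem stmt16_general {k m : Type*} [Fintype k] [Fintype m] {Ω : Matrix m m ℝ}
    {H : Matrix m m ℂ} {S : ℝ → Matrix m k ℂ} {J : ℝ → Matrix m m ℝ} {t : ℝ}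
    (hS : HasDerivAt S (Ω.map Complex.ofReal * H * S t) t)
    (hJ : HasDerivAt J (Ω * reMat H * J t - J t * Ω * reMat H
      + Ω * imMat H + J t * Ω * imMat H * J t) t)
    (z₀ : k → ℂ) :
    let z : ℝ → m → ℝ := fun s =>
      (fun i => ((S s *ᵥ z₀) i).re) + J s *ᵥ (fun i => ((S s *ᵥ z₀) i).im)
    HasDerivAt z ((Ω * reMat H) *ᵥ z t + (J t * Ω * imMat H) *ᵥ z t) t := by
  have hψ : HasDerivAt (fun s => S s *ᵥ z₀)
      ((Ω.map Complex.ofReal * H) *ᵥ (S t *ᵥ z₀)) t := by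
    simpa using hasDerivAt_mulVec hS (hasDerivAt_const t z₀)
  simp only [Matrix.mul_assoc (J t) Ω, ← reMat_map_ofReal_mul Ω H,
    ← imMat_map_ofReal_mul Ω H] at hJ ⊢
  exact hasDerivAt_re_add_mulVec_im_of_riccati hψ hJ

theorem stmt16 (n : ℕ) (hn : 1 ≤ n)
    (H : ℝ → Matrix (Fin n ⊕ Fin n) (Fin n ⊕ Fin n) ℂ)
    (hHcont : ∀ i j, Continuous fun t => H t i j)
    (hHsymm : ∀ t, (H t)ᵀ = H t)
    (S : ℝ → Matrix (Fin n ⊕ Fin n) (Fin n ⊕ Fin n) ℂ)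
    (hS0 : S 0 = 1)
    (hSderiv : ∀ t i j, HasDerivAt (fun s => S s i j) ((Omc n * H t * S t) i j) t)
    (J : ℝ → Matrix (Fin n ⊕ Fin n) (Fin n ⊕ Fin n) ℝ)
    (hJderiv : ∀ t i j, HasDerivAt (fun s => J s i j)
      ((Omr n * reMat (H t) * J t - J t * Omr n * reMat (H t)
        + Omr n * imMat (H t) + J t * Omr n * imMat (H t) * J t) i j) t)
    (z₀ : Fin n ⊕ Fin n → ℝ) :
    -- z(t) = Re(S(t)z₀) + J(t)·Im(S(t)z₀)
    let z : ℝ → (Fin n ⊕ Fin n → ℝ) := fun t =>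
      (fun i => (S t *ᵥ (fun k => (z₀ k : ℂ))) i |>.re) +
        J t *ᵥ (fun i => (S t *ᵥ (fun k => (z₀ k : ℂ))) i |>.im)
    ∀ t i, HasDerivAt (fun s => z s i)
      (((Omr n * reMat (H t)) *ᵥ z t + (J t * Omr n * imMat (H t)) *ᵥ z t) i) t := by
  exact fun t => hasDerivAt_pi.1 <| stmt16_general
    (hasDerivAt_matrix_iff.2 (Omc_eq_map_Omr n ▸ hSderiv t)) (hasDerivAt_matrix_iff.2 (hJderiv t)) _
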